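/- Every local minimum of ℓ_λ in U(λ,θ) is an isolated local minimum: if W ∈ U(λ,θ) is a local minimum of ℓ_λ (no differentiability assumed), then there exists ε > 0 such that ℓ_λ(V) > ℓ_λ(W) for all V with 0 < ‖V − W‖ < ε. -/

import Mathlib

open scoped BigOperators

/-- Index set for all weights of the network: a weight `w^i_{j,k}` connects
neuron `j` in layer `i` to neuron `k` in layer `i+1`. -/
abbrev WeightIdx (n : ℕ → ℕ) (H : ℕ) : Type :=
  (i : Fin (H + 1)) × (Fin (n i) × Fin (n (i + 1)))

/-- Weight space `ℝ^m`, with the Euclidean norm. -/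
abbrev WeightSpace (n : ℕ → ℕ) (H : ℕ) : Type :=
  EuclideanSpace ℝ (WeightIdx n H)

/-- Activations of the feed-forward ReLU network:
`x_0 = a`, `x_{k+1} = σ(W_k^T x_k)`. -/
def netAct (n : ℕ → ℕ) (H : ℕ) (W : WeightSpace n H)
    (a : EuclideanSpace ℝ (Fin (n 0))) : (k : ℕ) → k ≤ H + 1 → (Fin (n k) → ℝ)
  | 0, _ => a
  | k + 1, h => fun j =>
      max (∑ l : Fin (n k), W ⟨⟨k, h⟩, (l, j)⟩ * netAct n H W a k (Nat.le_of_succ_le h) l) 0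

/-- Scalar output of the ReLU network, `y(a, W)`. -/
def netOut (n : ℕ → ℕ) (H : ℕ) (hout : n (H + 1) = 1) (W : WeightSpace n H)
    (a : EuclideanSpace ℝ (Fin (n 0))) : ℝ :=
  netAct n H W a (H + 1) le_rfl ⟨0, by omega⟩

/-- Quadratic training loss `ℓ(W)`. -/
noncomputable def loss (n : ℕ → ℕ) (H N : ℕ) (hout : n (H + 1) = 1)
    (a : Fin N → EuclideanSpace ℝ (Fin (n 0)))
    (f : EuclideanSpace ℝ (Fin (n 0)) → ℝ) (W : WeightSpace n H) : ℝ :=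
  (1 / (2 * (N : ℝ))) * ∑ i, (f (a i) - netOut n H hout W (a i)) ^ 2

/-- Regularized loss `ℓ_λ(W) = ℓ(W) + (λ/2)‖W‖²`. -/
noncomputable def lossReg (n : ℕ → ℕ) (H N : ℕ) (hout : n (H + 1) = 1)
    (a : Fin N → EuclideanSpace ℝ (Fin (n 0)))
    (f : EuclideanSpace ℝ (Fin (n 0)) → ℝ) (lam : ℝ) (W : WeightSpace n H) : ℝ :=
  loss n H N hout a f W + lam / 2 * ‖W‖ ^ 2

/-- The `i`-th weight matrix `W_i` of a weight vector `W`. -/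
def block (n : ℕ → ℕ) (H : ℕ) (W : WeightSpace n H) (i : Fin (H + 1)) :
    Matrix (Fin (n i)) (Fin (n (i + 1))) ℝ :=
  Matrix.of fun j k => W ⟨i, (j, k)⟩

/-- Operator norm (induced by the Euclidean norms) of a matrix. -/
noncomputable def opNorm2 {p q : ℕ} (M : Matrix (Fin p) (Fin q) ℝ) : ℝ :=
  ‖LinearMap.toContinuousLinearMap (Matrix.toEuclideanLin M)‖

/-- `‖W‖_* = max_i ‖W_i‖₂`. -/
noncomputable def starNorm (n : ℕ → ℕ) (H : ℕ) (W : WeightSpace n H) : ℝ :=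
  ⨆ i : Fin (H + 1), opNorm2 (block n H W i)

/-- The set `U(λ,θ)`. -/
noncomputable def Uset (n : ℕ → ℕ) (H N : ℕ) (hout : n (H + 1) = 1)
    (a : Fin N → EuclideanSpace ℝ (Fin (n 0)))
    (f : EuclideanSpace ℝ (Fin (n 0)) → ℝ) (lam θ r : ℝ) : Set (WeightSpace n H) :=
  {W | Real.sqrt (loss n H N hout a f W) * starNorm n H W ^ (H - 1) <
    (lam - θ) / (Real.sqrt 2 * ((H : ℝ) * ((H : ℝ) + 1)) * r)}

/-!
ReLU has an exact one-sided first-order expansion even at its kink, so the network has a one-sided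
expansion in the weights at every `W`. By the Taylor coefficients of a product of `H + 1` factors,
its quadratic remainder is at most `H (H + 1) / 2 * u ^ (H - 1) * r * ‖V - W‖ ^ 2` near `W`, for any
`u > ‖W‖_*`. In the squared error this remainder is multiplied by the residual, while the
regularization contributes `λ / 2 * ‖V - W‖ ^ 2`. At a local minimum all one-sided directional
derivatives are nonnegative, so the minimum is strict as soon as the second coefficient exceeds the
first, which is what membership in `U(λ, θ)` guarantees.
-/

open Filter Topology NNReal

section ConicExpansion

variable {E F F' : Type*} [NormedAddCommGroup E] [NormedSpace ℝ E]
  [NormedAddCommGroup F] [NormedSpace ℝ F] [NormedAddCommGroup F'] [NormedSpace ℝ F']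

/-- `g (W + X) = g W + G X + O(‖X‖²)` near `W` for a positively homogeneous `G`: a quantitative
one-sided differentiability, with `D` bounding the first-order part `G` and `K` the coefficient of
the quadratic remainder. ReLU networks satisfy it at their kinks as well, where `G` is not
linear. -/
structure HasConicExpansionAt (g G : E → F) (W : E) (D K : ℝ) : Prop where
  map_smul : ∀ t : ℝ, 0 ≤ t → ∀ X, G (t • X) = t • G X
  norm_le : ∀ X, ‖G X‖ ≤ D * ‖X‖
  norm_remainder_le : ∀ᶠ V in 𝓝 W, ‖g V - g W - G (V - W)‖ ≤ K * ‖V - W‖ ^ 2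

lemma tendsto_add_smul_nhdsGE (W X : E) :
    Tendsto (fun t : ℝ => W + t • X) (𝓝[≥] 0) (𝓝 W) := by
  have : Continuous fun t : ℝ => W + t • X := by fun_prop
  simpa using (this.tendsto 0).mono_left nhdsWithin_le_nhds

namespace HasConicExpansionAt

variable {g G : E → F} {W : E} {D K : ℝ}

lemma const (c : F) (W : E) : HasConicExpansionAt (fun _ => c) (fun _ => 0) W 0 0 where
  map_smul := by simp
  norm_le := by simp
  norm_remainder_le := by simp

lemma continuousAt (hg : HasConicExpansionAt g G W D K) : ContinuousAt g W := by
  have hbound : ∀ᶠ V in 𝓝 W, ‖g V - g W‖ ≤ D * ‖V - W‖ + K * ‖V - W‖ ^ 2 := by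
    filter_upwards [hg.norm_remainder_le] with V hV
    linarith [norm_sub_norm_le (g V - g W) (G (V - W)), hg.norm_le (V - W)]
  have hlim : Tendsto (fun V => D * ‖V - W‖ + K * ‖V - W‖ ^ 2) (𝓝 W) (𝓝 0) := by
    have : Continuous fun V => D * ‖V - W‖ + K * ‖V - W‖ ^ 2 := by fun_prop
    simpa using this.tendsto W
  exact tendsto_iff_norm_sub_tendsto_zero.2
    (squeeze_zero' (.of_forall fun _ => norm_nonneg _) hbound hlim)

lemma hasDerivWithinAt_ray (hg : HasConicExpansionAt g G W D K) (X : E) :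
    HasDerivWithinAt (fun t : ℝ => g (W + t • X)) (G X) (Set.Ici 0) 0 := by
  have hO : (fun t : ℝ => g (W + t • X) - g W - t • G X) =O[𝓝[≥] 0] fun t : ℝ => t ^ 2 := by
    refine .of_bound (K * ‖X‖ ^ 2) ?_
    filter_upwards [(tendsto_add_smul_nhdsGE W X).eventually hg.norm_remainder_le,
      self_mem_nhdsWithin] with t ht ht0
    rw [add_sub_cancel_left, hg.map_smul t ht0, norm_smul, mul_pow] at ht
    rw [norm_pow]
    linarith
  rw [hasDerivWithinAt_iff_isLittleO]
  simpa using hO.trans_isLittleO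
    ((Asymptotics.isLittleO_pow_id one_lt_two).mono nhdsWithin_le_nhds)

lemma comp (hg : HasConicExpansionAt g G W D K) {φ ψ : F → F'} {C : ℝ≥0}
    (hψ : LipschitzWith C ψ) (hψ_smul : ∀ t : ℝ, 0 ≤ t → ∀ x, ψ (t • x) = t • ψ x)
    (hφ : ∀ᶠ z in 𝓝 (g W), φ z = φ (g W) + ψ (z - g W)) :
    HasConicExpansionAt (fun V => φ (g V)) (fun X => ψ (G X)) W (C * D) (C * K) where
  map_smul t ht X := by rw [hg.map_smul t ht, hψ_smul t ht]
  norm_le X := by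
    have hψ_zero : ψ 0 = 0 := by simpa using hψ_smul 0 le_rfl 0
    calc ‖ψ (G X)‖ ≤ C * ‖G X‖ := by simpa [hψ_zero] using hψ.norm_sub_le (G X) 0
      _ ≤ C * (D * ‖X‖) := by gcongr; exact hg.norm_le X
      _ = C * D * ‖X‖ := by ring
  norm_remainder_le := by
    filter_upwards [hg.norm_remainder_le, hg.continuousAt.eventually hφ] with V hV hφV
    rw [hφV, add_sub_cancel_left]
    calc ‖ψ (g V - g W) - ψ (G (V - W))‖ ≤ C * ‖g V - g W - G (V - W)‖ := hψ.norm_sub_le _ _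
      _ ≤ C * (K * ‖V - W‖ ^ 2) := by gcongr
      _ = C * K * ‖V - W‖ ^ 2 := by ring

lemma clm_apply (hg : HasConicExpansionAt g G W D K) (A : E →L[ℝ] F →L[ℝ] F') {u B : ℝ}
    (hA : ‖A‖ ≤ 1) (hAW : ‖A W‖ < u) (hgW : ‖g W‖ ≤ B) :
    HasConicExpansionAt (fun V => A V (g V)) (fun X => A W (G X) + A X (g W)) W
      (u * D + B) (u * K + D) where
  map_smul t ht X := by simp [hg.map_smul t ht, smul_add]
  norm_le X := by
    calc ‖A W (G X) + A X (g W)‖ ≤ u * (D * ‖X‖) + ‖X‖ * B :=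
          norm_add_le_of_le ((A W).le_of_opNorm_le_of_le hAW.le (hg.norm_le X))
            ((A X).le_of_opNorm_le_of_le (by simpa using A.le_of_opNorm_le hA X) hgW)
      _ = (u * D + B) * ‖X‖ := by ring
  norm_remainder_le := by
    have hAV : ∀ᶠ V in 𝓝 W, ‖A V‖ < u :=
      A.continuous.norm.continuousAt.eventually_lt_const hAW
    filter_upwards [hg.norm_remainder_le, hAV] with V hV hAV
    have hsplit : A V (g V) - A W (g W) - (A W (G (V - W)) + A (V - W) (g W))
        = A V (g V - g W - G (V - W)) + A (V - W) (G (V - W)) := by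
      simp only [map_sub, sub_apply]
      abel
    rw [hsplit]
    calc ‖A V (g V - g W - G (V - W)) + A (V - W) (G (V - W))‖
        ≤ u * (K * ‖V - W‖ ^ 2) + ‖V - W‖ * (D * ‖V - W‖) :=
          norm_add_le_of_le ((A V).le_of_opNorm_le_of_le hAV.le hV)
            ((A (V - W)).le_of_opNorm_le_of_le (by simpa using A.le_of_opNorm_le hA (V - W))
              (hg.norm_le _))
      _ = (u * K + D) * ‖V - W‖ ^ 2 := by ring

end HasConicExpansionAt

end ConicExpansion

section LeastSquares

variable {E F : Type*} [NormedAddCommGroup E] [InnerProductSpace ℝ E]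
  [NormedAddCommGroup F] [InnerProductSpace ℝ F]

lemma nonneg_of_isLocalMinOn_Ici_of_hasDerivWithinAt {φ : ℝ → ℝ} {φ' x : ℝ}
    (hmin : IsLocalMinOn φ (Set.Ici x) x) (hφ : HasDerivWithinAt φ φ' (Set.Ici x) x) :
    0 ≤ φ' := by
  have hcone : (1 : ℝ) ∈ posTangentConeAt (Set.Ici x) x :=
    mem_posTangentConeAt_of_segment_subset (by
      rw [segment_eq_Icc (le_add_of_nonneg_right zero_le_one)]
      exact Set.Icc_subset_Ici_self)
  simpa using hmin.hasFDerivWithinAt_nonneg hφ.hasFDerivWithinAt hcone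

/-- The Tikhonov-regularized least-squares objective of the model `y` for the target `b`. -/
noncomputable def ridgeObjective (y : E → F) (b : F) (lam : ℝ) (V : E) : ℝ :=
  1 / 2 * ‖y V - b‖ ^ 2 + lam / 2 * ‖V‖ ^ 2

namespace HasConicExpansionAt

variable {y G : E → F} {W : E} {D K lam : ℝ} {b : F}

lemma hasDerivWithinAt_ridgeObjective_ray (hy : HasConicExpansionAt y G W D K) (X : E) :
    HasDerivWithinAt (fun t : ℝ => ridgeObjective y b lam (W + t • X))
      (inner ℝ (y W - b) (G X) + lam * inner ℝ W X) (Set.Ici 0) 0 := by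
  have hray : HasDerivWithinAt (fun t : ℝ => W + t • X) X (Set.Ici 0) 0 := by
    simpa using ((hasDerivWithinAt_id (0 : ℝ) (Set.Ici 0)).smul_const X).const_add W
  refine ((((hy.hasDerivWithinAt_ray X).sub_const b).norm_sq.const_mul (1 / 2)).fun_add
    (hray.norm_sq.const_mul (lam / 2))).congr_deriv ?_
  simp only [zero_smul, add_zero]
  ring

lemma eventually_le_ridgeObjective (hy : HasConicExpansionAt y G W D K) :
    ∀ᶠ V in 𝓝 W, ridgeObjective y b lam W
        + (inner ℝ (y W - b) (G (V - W)) + lam * inner ℝ W (V - W))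
        + (lam / 2 - K * ‖y W - b‖) * ‖V - W‖ ^ 2 ≤ ridgeObjective y b lam V := by
  filter_upwards [hy.norm_remainder_le] with V hV
  have hfit : ‖y V - b‖ ^ 2 = ‖y W - b‖ ^ 2 + 2 * inner ℝ (y W - b) (y V - y W)
      + ‖y V - y W‖ ^ 2 := by
    rw [← norm_add_sq_real, add_comm (y W - b), sub_add_sub_cancel]
  have hreg : ‖V‖ ^ 2 = ‖W‖ ^ 2 + 2 * inner ℝ W (V - W) + ‖V - W‖ ^ 2 := by
    rw [← norm_add_sq_real, add_sub_cancel]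
  have hremainder : -(‖y W - b‖ * (K * ‖V - W‖ ^ 2))
      ≤ inner ℝ (y W - b) (y V - y W - G (V - W)) :=
    neg_le_of_abs_le ((abs_real_inner_le_norm _ _).trans (by gcongr))
  rw [inner_sub_right] at hremainder
  rw [ridgeObjective, ridgeObjective, hfit, hreg]
  linarith [sq_nonneg ‖y V - y W‖]

theorem eventually_ridgeObjective_lt (hy : HasConicExpansionAt y G W D K)
    (hK : 2 * K * ‖y W - b‖ < lam) (hmin : IsLocalMin (ridgeObjective y b lam) W) :
    ∀ᶠ V in 𝓝[≠] W, ridgeObjective y b lam W < ridgeObjective y b lam V := by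
  have hderiv_nonneg (X : E) : 0 ≤ inner ℝ (y W - b) (G X) + lam * inner ℝ W X := by
    have hminray : IsLocalMinOn (fun t : ℝ => ridgeObjective y b lam (W + t • X)) (Set.Ici 0) 0 :=
      ((tendsto_add_smul_nhdsGE W X).eventually hmin).mono fun t ht => by simpa using ht
    exact nonneg_of_isLocalMinOn_Ici_of_hasDerivWithinAt hminray
      (hy.hasDerivWithinAt_ridgeObjective_ray X)
  have hlower := hy.eventually_le_ridgeObjective (b := b) (lam := lam)
  filter_upwards [hlower.filter_mono nhdsWithin_le_nhds, self_mem_nhdsWithin] with V hV hVW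
  have hquad : 0 < (lam / 2 - K * ‖y W - b‖) * ‖V - W‖ ^ 2 :=
    mul_pos (by linarith) (pow_pos (norm_sub_pos_iff.2 hVW) 2)
  linarith [hderiv_nonneg (V - W)]

end HasConicExpansionAt

end LeastSquares

section SampleMean

variable {ι : Type*} [Fintype ι]

/-- A finite sample as a Euclidean vector, scaled so that its norm is the root mean square of the
sample; it turns the mean squared error into a squared distance. -/
noncomputable def rmsVec (ι : Type*) [Fintype ι] : (ι → ℝ) →ₗ[ℝ] EuclideanSpace ℝ ι :=
  (√(Fintype.card ι))⁻¹ • (WithLp.linearEquiv 2 ℝ (ι → ℝ)).symm.toLinearMap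

lemma norm_rmsVec_sq (g : ι → ℝ) : ‖rmsVec ι g‖ ^ 2 = (∑ i, g i ^ 2) / Fintype.card ι := by
  simp [rmsVec, norm_smul, mul_pow, EuclideanSpace.norm_sq_eq, div_eq_inv_mul]

lemma norm_rmsVec_le {g : ι → ℝ} {C : ℝ} (hC : 0 ≤ C) (hg : ∀ i, |g i| ≤ C) :
    ‖rmsVec ι g‖ ≤ C := by
  refine le_of_sq_le_sq ?_ hC
  rw [norm_rmsVec_sq]
  refine div_le_of_le_mul₀ (by positivity) (by positivity) ?_
  calc ∑ i, g i ^ 2 ≤ ∑ _i : ι, C ^ 2 :=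
        Finset.sum_le_sum fun i _ => sq_le_sq' (neg_le_of_abs_le (hg i)) (le_of_abs_le (hg i))
    _ = C ^ 2 * Fintype.card ι := by simp [mul_comm]

lemma HasConicExpansionAt.apply {E : Type*} [NormedAddCommGroup E] [NormedSpace ℝ E]
    {y G : E → EuclideanSpace ℝ ι} {W : E} {D K : ℝ} (hy : HasConicExpansionAt y G W D K)
    (i : ι) : HasConicExpansionAt (fun V => y V i) (fun X => G X i) W D K := by
  simpa using hy.comp (φ := fun x => x i) (ψ := fun x => x i) (C := 1)
    (.of_dist_le_mul fun x x' => by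
      simpa [dist_eq_norm] using PiLp.norm_apply_le (x - x') i) (by simp) (by simp)

lemma HasConicExpansionAt.rmsVec {E : Type*} [NormedAddCommGroup E] [NormedSpace ℝ E]
    {y G : ι → E → ℝ} {W : E} {D K : ℝ} (hD : 0 ≤ D) (hK : 0 ≤ K)
    (hy : ∀ i, HasConicExpansionAt (y i) (G i) W D K) :
    HasConicExpansionAt (fun V => rmsVec ι fun i => y i V) (fun X => rmsVec ι fun i => G i X)
      W D K where
  map_smul t ht X := by
    rw [← LinearMap.map_smul]
    congr 1
    ext i
    exact (hy i).map_smul t ht X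
  norm_le X := norm_rmsVec_le (by positivity) fun i => (hy i).norm_le X
  norm_remainder_le := by
    filter_upwards [eventually_all.2 fun i => (hy i).norm_remainder_le] with V hV
    rw [← map_sub, ← map_sub]
    exact norm_rmsVec_le (by positivity) hV

end SampleMean

section ReLU

/-- The one-sided derivative of `fun s => max s 0` at `z` in the direction `d`. -/
noncomputable def reluDirDeriv (z d : ℝ) : ℝ :=
  if 0 < z then d else if z < 0 then 0 else max d 0

lemma abs_reluDirDeriv_sub_le (z d d' : ℝ) :
    |reluDirDeriv z d - reluDirDeriv z d'| ≤ |d - d'| := by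
  unfold reluDirDeriv
  split_ifs
  · exact le_rfl
  · simp
  · exact abs_max_sub_max_le_abs d d' 0

lemma reluDirDeriv_mul_of_nonneg (z d : ℝ) {t : ℝ} (ht : 0 ≤ t) :
    reluDirDeriv z (t * d) = t * reluDirDeriv z d := by
  unfold reluDirDeriv
  split_ifs
  · rfl
  · simp
  · rw [mul_max_of_nonneg _ _ ht, mul_zero]

lemma eventually_max_zero_eq_add_reluDirDeriv (z : ℝ) :
    ∀ᶠ s in 𝓝 z, max s 0 = max z 0 + reluDirDeriv z (s - z) := by
  rcases lt_trichotomy z 0 with hz | rfl | hz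
  · filter_upwards [Iio_mem_nhds hz] with s hs
    simp [reluDirDeriv, hz, hz.not_gt, hz.le, (Set.mem_Iio.1 hs).le]
  · simp [reluDirDeriv]
  · filter_upwards [Ioi_mem_nhds hz] with s hs
    simp [reluDirDeriv, hz, hz.le, (Set.mem_Ioi.1 hs).le]

variable {ι : Type*}

/-- The coordinatewise ReLU `σ` on Euclidean space. -/
noncomputable def reluVec (z : EuclideanSpace ℝ ι) : EuclideanSpace ℝ ι :=
  WithLp.toLp 2 fun j => max (z j) 0

/-- The one-sided directional derivative of the coordinatewise ReLU. -/
noncomputable def reluVecDirDeriv (z d : EuclideanSpace ℝ ι) : EuclideanSpace ℝ ι :=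
  WithLp.toLp 2 fun j => reluDirDeriv (z j) (d j)

lemma reluVecDirDeriv_smul_of_nonneg (z d : EuclideanSpace ℝ ι) {t : ℝ} (ht : 0 ≤ t) :
    reluVecDirDeriv z (t • d) = t • reluVecDirDeriv z d := by
  ext j
  exact reluDirDeriv_mul_of_nonneg (z j) (d j) ht

lemma eventually_reluVec_eq_add_reluVecDirDeriv [Finite ι] (z : EuclideanSpace ℝ ι) :
    ∀ᶠ s in 𝓝 z, reluVec s = reluVec z + reluVecDirDeriv z (s - z) := by
  have hcoord (j : ι) :
      ∀ᶠ s in 𝓝 z, max (s j) 0 = max (z j) 0 + reluDirDeriv (z j) (s j - z j) :=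
    ((PiLp.continuous_apply 2 _ j).tendsto z).eventually
      (eventually_max_zero_eq_add_reluDirDeriv (z j))
  filter_upwards [eventually_all.2 hcoord] with s hs
  ext j
  exact hs j

variable [Fintype ι]

lemma euclidean_norm_le_of_forall_abs_le {x y : EuclideanSpace ℝ ι} (h : ∀ j, |x j| ≤ |y j|) :
    ‖x‖ ≤ ‖y‖ := by
  simp only [EuclideanSpace.norm_eq]
  exact Real.sqrt_le_sqrt
    (Finset.sum_le_sum fun j _ => pow_le_pow_left₀ (norm_nonneg _) (h j) 2)

lemma norm_reluVec_le (z : EuclideanSpace ℝ ι) : ‖reluVec z‖ ≤ ‖z‖ :=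
  euclidean_norm_le_of_forall_abs_le fun j => by
    simpa [reluVec] using abs_max_sub_max_le_abs (z j) 0 0

lemma lipschitzWith_reluVecDirDeriv (z : EuclideanSpace ℝ ι) :
    LipschitzWith 1 (reluVecDirDeriv z) :=
  .of_dist_le_mul fun d d' => by
    simpa [dist_eq_norm] using euclidean_norm_le_of_forall_abs_le
      (x := reluVecDirDeriv z d - reluVecDirDeriv z d') (y := d - d') fun j =>
        abs_reluDirDeriv_sub_le (z j) (d j) (d' j)

lemma HasConicExpansionAt.reluVec {E : Type*} [NormedAddCommGroup E] [NormedSpace ℝ E]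
    {g G : E → EuclideanSpace ℝ ι} {W : E} {D K : ℝ} (hg : HasConicExpansionAt g G W D K) :
    HasConicExpansionAt (fun V => reluVec (g V)) (fun X => reluVecDirDeriv (g W) (G X)) W D K := by
  simpa using hg.comp (lipschitzWith_reluVecDirDeriv (g W))
    (fun _ ht d => reluVecDirDeriv_smul_of_nonneg (g W) d ht)
    (eventually_reluVec_eq_add_reluVecDirDeriv (g W))

end ReLU

section Network

open scoped Matrix.Norms.L2Operator

variable {n : ℕ → ℕ} {H : ℕ}

lemma opNorm2_transpose {p q : ℕ} (M : Matrix (Fin p) (Fin q) ℝ) :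
    opNorm2 M.transpose = opNorm2 M := by
  have := M.l2_opNorm_conjTranspose
  rwa [Matrix.conjTranspose_eq_transpose_of_trivial] at this

lemma opNorm2_le_sqrt_sum_sq {p q : ℕ} (M : Matrix (Fin p) (Fin q) ℝ) :
    opNorm2 M ≤ √(∑ j, ∑ k, M j k ^ 2) := by
  refine ContinuousLinearMap.opNorm_le_bound _ (by positivity) fun x => ?_
  rw [EuclideanSpace.norm_eq x, ← Real.sqrt_mul (by positivity), EuclideanSpace.norm_eq,
    Finset.sum_mul]
  refine Real.sqrt_le_sqrt (Finset.sum_le_sum fun j _ => ?_)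
  simpa [Matrix.toLpLin_apply, Matrix.mulVec, dotProduct] using
    Finset.sum_mul_sq_le_sq_mul_sq Finset.univ (M j) x

lemma opNorm2_block_le_norm (W : WeightSpace n H) (i : Fin (H + 1)) :
    opNorm2 (block n H W i) ≤ ‖W‖ := by
  refine (opNorm2_le_sqrt_sum_sq _).trans ?_
  rw [EuclideanSpace.norm_eq, Fintype.sum_sigma]
  refine Real.sqrt_le_sqrt ?_
  simpa only [block, Matrix.of_apply, Fintype.sum_prod_type, Real.norm_eq_abs, sq_abs] using
    Finset.single_le_sum
      (f := fun i : Fin (H + 1) => ∑ p : Fin (n i) × Fin (n (i + 1)), W ⟨i, p⟩ ^ 2)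
      (fun _ _ => by positivity) (Finset.mem_univ i)

/-- The linear part `x ↦ Wᵢᵀ x` of the `i`-th layer, as a continuous bilinear function of the
weights `W` and the input `x`. -/
noncomputable def layer (n : ℕ → ℕ) (H : ℕ) (i : Fin (H + 1)) :
    WeightSpace n H →L[ℝ] EuclideanSpace ℝ (Fin (n i)) →L[ℝ] EuclideanSpace ℝ (Fin (n (i + 1))) :=
  LinearMap.mkContinuous
    { toFun := fun W =>
        LinearMap.toContinuousLinearMap (Matrix.toEuclideanLin (block n H W i).transpose)
      map_add' := fun V W => by
        ext x j
        simp [block, Matrix.toLpLin_apply, Matrix.mulVec, dotProduct, add_mul,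
          Finset.sum_add_distrib]
      map_smul' := fun t W => by
        ext x j
        simp [block, Matrix.toLpLin_apply, Matrix.mulVec, dotProduct, mul_assoc,
          Finset.mul_sum] }
    1 fun W => by
      rw [one_mul]
      exact (opNorm2_transpose _).trans_le (opNorm2_block_le_norm W i)

lemma norm_layer_le_one (i : Fin (H + 1)) : ‖layer n H i‖ ≤ 1 :=
  LinearMap.mkContinuous_norm_le _ zero_le_one _

lemma norm_layer_apply_le_starNorm (i : Fin (H + 1)) (W : WeightSpace n H) :
    ‖layer n H i W‖ ≤ starNorm n H W :=
  (opNorm2_transpose _).trans_le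
    (le_ciSup (f := fun i => opNorm2 (block n H W i)) (Set.finite_range _).bddAbove i)

lemma starNorm_nonneg (W : WeightSpace n H) : 0 ≤ starNorm n H W :=
  Real.iSup_nonneg fun _ => norm_nonneg _

/-- The activations `x_k` of `netAct`, as Euclidean vectors. -/
noncomputable def activation (W : WeightSpace n H) (a : EuclideanSpace ℝ (Fin (n 0))) (k : ℕ)
    (h : k ≤ H + 1) : EuclideanSpace ℝ (Fin (n k)) :=
  WithLp.toLp 2 (netAct n H W a k h)

lemma activation_succ (W : WeightSpace n H) (a : EuclideanSpace ℝ (Fin (n 0))) (k : ℕ)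
    (h : k + 1 ≤ H + 1) :
    activation W a (k + 1) h
      = reluVec (layer n H ⟨k, h⟩ W (activation W a k (Nat.le_of_succ_le h))) :=
  rfl

variable {W : WeightSpace n H} {u r : ℝ}

lemma norm_activation_le (hu : starNorm n H W ≤ u) {a : EuclideanSpace ℝ (Fin (n 0))}
    (ha : ‖a‖ ≤ r) (k : ℕ) (h : k ≤ H + 1) : ‖activation W a k h‖ ≤ u ^ k * r := by
  induction k with
  | zero => simpa [activation, netAct] using ha
  | succ k ih =>
    rw [activation_succ, pow_succ', mul_assoc]
    exact (norm_reluVec_le _).trans (ContinuousLinearMap.le_of_opNorm_le_of_le _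
      ((norm_layer_apply_le_starNorm _ W).trans hu) (ih _))

-- The constants `u ^ k`, `k * u ^ (k - 1)`, `k.choose 2 * u ^ (k - 2)` bounding the activation, its
-- derivative and its remainder are the Taylor coefficients of `(u + t) ^ k`.
theorem exists_hasConicExpansionAt_activation (hu : starNorm n H W < u)
    {a : EuclideanSpace ℝ (Fin (n 0))} (ha : ‖a‖ ≤ r) (k : ℕ) (h : k ≤ H + 1) :
    ∃ G, HasConicExpansionAt (fun V => activation V a k h) G W
      (k * u ^ (k - 1) * r) (k.choose 2 * u ^ (k - 2) * r) := by
  induction k with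
  | zero => exact ⟨_, by simpa [activation, netAct] using .const a W⟩
  | succ k ih =>
    obtain ⟨G, hG⟩ := ih (Nat.le_of_succ_le h)
    have hD : u * (k * u ^ (k - 1) * r) + u ^ k * r = (k + 1 : ℕ) * u ^ (k + 1 - 1) * r := by
      rcases k with _ | k
      · simp
      · push_cast [Nat.add_sub_cancel]; ring
    have hK : u * (k.choose 2 * u ^ (k - 2) * r) + k * u ^ (k - 1) * r
        = (k + 1).choose 2 * u ^ (k + 1 - 2) * r := by
      rcases k with _ | _ | k
      · simp
      · simp
      · simp only [Nat.choose_succ_succ' (k + 2) 1, Nat.choose_one_right, Nat.reduceSubDiff]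
        push_cast [Nat.add_sub_cancel]; ring
    have hlinear := hG.clm_apply (layer n H ⟨k, h⟩) (norm_layer_le_one _)
      ((norm_layer_apply_le_starNorm _ W).trans_lt hu) (norm_activation_le hu.le ha k _)
    rw [hD, hK] at hlinear
    exact ⟨_, hlinear.reluVec⟩

lemma exists_hasConicExpansionAt_netOut (hout : n (H + 1) = 1) (hu : starNorm n H W < u)
    {a : EuclideanSpace ℝ (Fin (n 0))} (ha : ‖a‖ ≤ r) :
    ∃ G, HasConicExpansionAt (fun V => netOut n H hout V a) G W
      ((H + 1) * u ^ H * r) (H * (H + 1) / 2 * u ^ (H - 1) * r) := by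
  obtain ⟨G, hG⟩ := exists_hasConicExpansionAt_activation hu ha (H + 1) le_rfl
  have hcoord := hG.apply ⟨0, by omega⟩
  exact ⟨_, by simpa [Nat.cast_choose_two, mul_comm (H : ℝ), netOut, activation] using hcoord⟩

end Network

section TrainingLoss

variable {n : ℕ → ℕ} {H N : ℕ} {hout : n (H + 1) = 1} {a : Fin N → EuclideanSpace ℝ (Fin (n 0))}
  {f : EuclideanSpace ℝ (Fin (n 0)) → ℝ}

lemma loss_eq_half_norm_sq (W : WeightSpace n H) :
    loss n H N hout a f W = 1 / 2 * ‖rmsVec (Fin N) (fun i => netOut n H hout W (a i))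
      - rmsVec (Fin N) fun i => f (a i)‖ ^ 2 := by
  rw [← map_sub, norm_rmsVec_sq, Fintype.card_fin, loss]
  simp only [Pi.sub_apply, sub_sq_comm]
  ring

lemma lossReg_eq_ridgeObjective (lam : ℝ) :
    lossReg n H N hout a f lam = ridgeObjective
      (fun V => rmsVec (Fin N) fun i => netOut n H hout V (a i))
      (rmsVec (Fin N) fun i => f (a i)) lam := by
  ext V
  rw [lossReg, ridgeObjective, loss_eq_half_norm_sq]

lemma norm_residual_eq (W : WeightSpace n H) :
    ‖rmsVec (Fin N) (fun i => netOut n H hout W (a i)) - rmsVec (Fin N) fun i => f (a i)‖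
      = √2 * √(loss n H N hout a f W) := by
  rw [loss_eq_half_norm_sq, ← Real.sqrt_mul zero_le_two, ← mul_assoc]
  simp

lemma lt_of_mem_Uset {lam θ r : ℝ} {W : WeightSpace n H} (hH : 1 ≤ H) (hr : 0 < r) (hθ : 0 ≤ θ)
    (hW : W ∈ Uset n H N hout a f lam θ r) :
    √(loss n H N hout a f W) * starNorm n H W ^ (H - 1) * (√2 * (H * (H + 1)) * r) < lam := by
  have hden : 0 < √2 * ((H : ℝ) * (H + 1)) * r := by
    have : (0 : ℝ) < H := by exact_mod_cast hH
    positivity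
  rw [Uset, Set.mem_ofPred_eq, lt_div_iff₀ hden] at hW
  linarith

end TrainingLoss

theorem local_minima_are_isolated_general (n : ℕ → ℕ) (H : ℕ)
    (hout : n (H + 1) = 1) (N : ℕ) (a : Fin N → EuclideanSpace ℝ (Fin (n 0)))
    (f : EuclideanSpace ℝ (Fin (n 0)) → ℝ) (r lam : ℝ) (hr : 0 ≤ r) (hnorm : ∀ i, ‖a i‖ ≤ r)
    (W : WeightSpace n H)
    (hW : √(loss n H N hout a f W) * starNorm n H W ^ (H - 1) * (√2 * (H * (H + 1)) * r) < lam)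
    (hmin : IsLocalMin (lossReg n H N hout a f lam) W) :
    ∃ ε > 0, ∀ V : WeightSpace n H, 0 < ‖V - W‖ → ‖V - W‖ < ε →
      lossReg n H N hout a f lam W < lossReg n H N hout a f lam V := by
  obtain ⟨u, hu, hWu⟩ : ∃ u,
      √(loss n H N hout a f W) * u ^ (H - 1) * (√2 * (H * (H + 1)) * r) < lam
        ∧ starNorm n H W < u := by
    have hcont : Continuous fun u : ℝ =>
        √(loss n H N hout a f W) * u ^ (H - 1) * (√2 * (H * (H + 1)) * r) := by fun_prop
    exact ((hcont.continuousAt.eventually_lt_const hW).filter_mono nhdsWithin_le_nhds |>.and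
      self_mem_nhdsWithin : ∀ᶠ u in 𝓝[>] starNorm n H W, _).exists
  have hu0 : 0 ≤ u := (starNorm_nonneg W).trans hWu.le
  choose G hG using fun i => exists_hasConicExpansionAt_netOut hout hWu (hnorm i)
  have hsample := HasConicExpansionAt.rmsVec (by positivity) (by positivity) hG
  rw [lossReg_eq_ridgeObjective] at hmin ⊢
  have hisolated := hsample.eventually_ridgeObjective_lt
    (by rw [norm_residual_eq]; convert hu using 1; ring) hmin
  obtain ⟨ε, hε, hball⟩ := Metric.eventually_nhds_iff.1 (eventually_nhdsWithin_iff.1 hisolated)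
  exact ⟨ε, hε, fun V hVW hVε => hball (by rwa [dist_eq_norm]) (norm_sub_pos_iff.1 hVW)⟩

/-- every local minimum of `ℓ_λ` in `U(λ,θ)` (no differentiability
assumed) is an isolated local minimum. -/
theorem local_minima_are_isolated (n : ℕ → ℕ) (H : ℕ) (hH : 1 ≤ H)
    (hout : n (H + 1) = 1) (hwidth : ∀ i, 1 ≤ i → i ≤ H → 1 < n i)
    (N : ℕ) (a : Fin N → EuclideanSpace ℝ (Fin (n 0)))
    (f : EuclideanSpace ℝ (Fin (n 0)) → ℝ)
    (r lam θ : ℝ) (hr : 0 < r) (hθ : 0 < θ) (hθlam : θ < lam)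
    (hnorm : ∀ i, ‖a i‖ ≤ r)
    (W : WeightSpace n H) (hW : W ∈ Uset n H N hout a f lam θ r)
    (hmin : IsLocalMin (lossReg n H N hout a f lam) W) :
    ∃ ε > 0, ∀ V : WeightSpace n H, 0 < ‖V - W‖ → ‖V - W‖ < ε →
      lossReg n H N hout a f lam W < lossReg n H N hout a f lam V :=
  local_minima_are_isolated_general n H hout N a f r lam hr.le hnorm W
    (lt_of_mem_Uset hH hr hθ.le hW) hmin
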